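/- The subgroup of GL₃(ℚ) generated by the matrices M_X, M_Y, M_τ is isomorphic to the presented group G₁ = ⟨X, Y, τ | X Y X⁻¹ Y⁻¹ = τ⁴, X τ X⁻¹ τ⁻¹ = 1, Y τ Y⁻¹ τ⁻¹ = 1⟩, via the homomorphism sending X ↦ M_X, Y ↦ M_Y, τ ↦ M_τ (i.e. this homomorphism from G₁ onto the matrix group is an isomorphism). -/

import Mathlib

/-!
In `G₁` the element `τ` is central and `X Y X⁻¹ = τ⁴ Y`, so `X Yᵇ = Yᵇ X τ⁴ᵇ` for every integer `b`.
Hence the words `Yᵇ Xᵃ τᶜ` are stable under left multiplication by the generators and their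
inverses, and every element of `G₁` has this form (`exists_normal_form`). The matrix of such a
word is the unitriangular matrix with entries `a`, `b` above the diagonal and `c / 4` in the corner
(`normal_form_matrix`), from which `a`, `b`, `c` can be read off; so the homomorphism has trivial
kernel. The order `Y`, `X`, `τ` is chosen because it makes the corner entry free of a product term.
-/

/-- The three generators X, Y, τ. -/
inductive Gen3 : Type
  | gX : Gen3
  | gY : Gen3
  | gT : Gen3

/-- The matrix M_X. -/
def MX : Matrix (Fin 3) (Fin 3) ℚ := !![1, 1, 0; 0, 1, 0; 0, 0, 1]

/-- The matrix M_Y. -/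
def MY : Matrix (Fin 3) (Fin 3) ℚ := !![1, 0, 0; 0, 1, 1; 0, 0, 1]

/-- The matrix M_τ. -/
def MT : Matrix (Fin 3) (Fin 3) ℚ := !![1, 0, 1/4; 0, 1, 0; 0, 0, 1]

/-- The relators [X,Y]τ⁻⁴, [X,τ], [Y,τ] of the presented group G₁. -/
def heisRels : Set (FreeGroup Gen3) :=
  { FreeGroup.of Gen3.gX * FreeGroup.of Gen3.gY * (FreeGroup.of Gen3.gX)⁻¹ *
      (FreeGroup.of Gen3.gY)⁻¹ * ((FreeGroup.of Gen3.gT) ^ 4)⁻¹,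
    FreeGroup.of Gen3.gX * FreeGroup.of Gen3.gT * (FreeGroup.of Gen3.gX)⁻¹ *
      (FreeGroup.of Gen3.gT)⁻¹,
    FreeGroup.of Gen3.gY * FreeGroup.of Gen3.gT * (FreeGroup.of Gen3.gY)⁻¹ *
      (FreeGroup.of Gen3.gT)⁻¹ }

/-- The upper unitriangular matrix with entries `a`, `b` above the diagonal and `c` in the corner,
as an element of `GL₃(ℚ)`. -/
def heisUnit (a b c : ℚ) : (Matrix (Fin 3) (Fin 3) ℚ)ˣ where
  val := !![1, a, c; 0, 1, b; 0, 0, 1]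
  inv := !![1, -a, a * b - c; 0, 1, -b; 0, 0, 1]
  val_inv := by
    ext i j
    fin_cases i <;> fin_cases j <;> simp [Matrix.mul_apply, Fin.sum_univ_three]
    ring
  inv_val := by
    ext i j
    fin_cases i <;> fin_cases j <;> simp [Matrix.mul_apply, Fin.sum_univ_three]
    ring

lemma heisUnit_mul (a b c a' b' c' : ℚ) :
    heisUnit a b c * heisUnit a' b' c' = heisUnit (a + a') (b + b') (c + c' + a * b') := by
  apply Units.ext
  ext i j
  fin_cases i <;> fin_cases j <;>
    simp [heisUnit, Matrix.mul_apply, Fin.sum_univ_three] <;> ring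

lemma heisUnit_zero : heisUnit 0 0 0 = 1 := by
  apply Units.ext
  ext i j
  fin_cases i <;> fin_cases j <;> simp [heisUnit]

lemma heisUnit_inv (a b c : ℚ) : (heisUnit a b c)⁻¹ = heisUnit (-a) (-b) (a * b - c) := by
  rw [inv_eq_iff_mul_eq_one, heisUnit_mul, ← heisUnit_zero]
  congr 1 <;> ring

/-- The product term in `heisUnit_mul` vanishes on powers as soon as `a * b = 0`. -/
lemma heisUnit_zpow (a b c : ℚ) (h : a * b = 0) (n : ℤ) :
    heisUnit a b c ^ n = heisUnit (n * a) (n * b) (n * c) := by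
  induction n using Int.induction_on with
  | zero => simp [heisUnit_zero]
  | succ k ih =>
    rw [zpow_add_one, ih, heisUnit_mul]
    push_cast
    congr 1
    · ring
    · ring
    · linear_combination (k : ℚ) * h
  | pred k ih =>
    rw [zpow_sub_one, ih, heisUnit_inv, heisUnit_mul]
    push_cast
    congr 1
    · ring
    · ring
    · linear_combination (1 + k : ℚ) * h

lemma normal_form_matrix (a b c : ℤ) :
    heisUnit 0 1 0 ^ b * heisUnit 1 0 0 ^ a * heisUnit 0 0 (1 / 4) ^ c =
      heisUnit a b (c / 4) := by
  rw [heisUnit_zpow _ _ _ (by simp), heisUnit_zpow _ _ _ (by simp),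
    heisUnit_zpow _ _ _ (by simp), heisUnit_mul, heisUnit_mul]
  congr 1 <;> ring

lemma heisUnit_eq_one {a b c : ℚ} (h : heisUnit a b c = 1) : a = 0 ∧ b = 0 ∧ c = 0 := by
  have hm : (!![1, a, c; 0, 1, b; 0, 0, 1] : Matrix (Fin 3) (Fin 3) ℚ) = 1 :=
    congrArg Units.val h
  refine ⟨?_, ?_, ?_⟩
  · simpa using congrFun (congrFun hm 0) 1
  · simpa using congrFun (congrFun hm 1) 2
  · simpa using congrFun (congrFun hm 0) 2

/-- The images in `GL₃(ℚ)` of the three generators. -/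
def heisGen : Gen3 → (Matrix (Fin 3) (Fin 3) ℚ)ˣ
  | .gX => heisUnit 1 0 0
  | .gY => heisUnit 0 1 0
  | .gT => heisUnit 0 0 (1 / 4)

lemma heisGen_rels : ∀ r ∈ heisRels, FreeGroup.lift heisGen r = 1 := by
  rintro r (rfl | rfl | rfl)
  · simp only [map_mul, map_inv, map_pow, FreeGroup.lift_apply_of, heisGen]
    rw [← zpow_natCast, heisUnit_zpow _ _ _ (by simp), heisUnit_inv, heisUnit_inv, heisUnit_inv,
      heisUnit_mul, heisUnit_mul, heisUnit_mul, heisUnit_mul, ← heisUnit_zero]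
    congr 1 <;> norm_num
  all_goals
    simp only [map_mul, map_inv, FreeGroup.lift_apply_of, heisGen]
    rw [heisUnit_inv, heisUnit_inv, heisUnit_mul, heisUnit_mul, heisUnit_mul, ← heisUnit_zero]
    congr 1 <;> norm_num

/-- Moving `x` past a power of `y` when `[x, y] = t⁴` and `t` commutes with `y`. -/
lemma mul_zpow_of_commutator {G : Type*} [Group G] {x y t : G}
    (hxy : x * y * x⁻¹ * y⁻¹ * (t ^ 4)⁻¹ = 1) (hyt : Commute y t) (b : ℤ) :
    x * y ^ b = t ^ (4 * b) * y ^ b * x := by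
  have h1 : x * y * x⁻¹ = t ^ 4 * y := by
    rwa [mul_inv_eq_one, mul_inv_eq_iff_eq_mul] at hxy
  have h2 : x * y ^ b * x⁻¹ = t ^ (4 * b) * y ^ b := by
    rw [← conj_zpow, h1, ((hyt.symm).pow_left 4).mul_zpow, zpow_mul]
    norm_cast
  rwa [mul_inv_eq_iff_eq_mul] at h2

lemma exists_normal_form (g : PresentedGroup heisRels) : ∃ a b c : ℤ,
    g = PresentedGroup.of Gen3.gY ^ b * PresentedGroup.of Gen3.gX ^ a *
      PresentedGroup.of Gen3.gT ^ c := by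
  -- The three defining relations, read off in `G₁`.
  have hxy := PresentedGroup.one_of_mem (rels := heisRels) (Or.inl rfl)
  have hxt := PresentedGroup.one_of_mem (rels := heisRels) (Or.inr (Or.inl rfl))
  have hyt := PresentedGroup.one_of_mem (rels := heisRels) (Or.inr (Or.inr rfl))
  simp only [map_mul, map_inv, map_pow] at hxy hxt hyt
  change PresentedGroup.of Gen3.gX * PresentedGroup.of Gen3.gY *
    (PresentedGroup.of Gen3.gX)⁻¹ * (PresentedGroup.of Gen3.gY)⁻¹ *
    (PresentedGroup.of Gen3.gT ^ 4)⁻¹ = 1 at hxy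
  change PresentedGroup.of Gen3.gX * PresentedGroup.of Gen3.gT *
    (PresentedGroup.of Gen3.gX)⁻¹ * (PresentedGroup.of Gen3.gT)⁻¹ = 1 at hxt
  change PresentedGroup.of Gen3.gY * PresentedGroup.of Gen3.gT *
    (PresentedGroup.of Gen3.gY)⁻¹ * (PresentedGroup.of Gen3.gT)⁻¹ = 1 at hyt
  have hg : g ∈ Subgroup.closure (Set.range (PresentedGroup.of (rels := heisRels))) := by
    rw [PresentedGroup.closure_range_of]; trivial
  have cxt : Commute (PresentedGroup.of Gen3.gX) (PresentedGroup.of (rels := heisRels) Gen3.gT) := by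
    rwa [mul_inv_eq_one, mul_inv_eq_iff_eq_mul] at hxt
  have cyt : Commute (PresentedGroup.of Gen3.gY) (PresentedGroup.of (rels := heisRels) Gen3.gT) := by
    rwa [mul_inv_eq_one, mul_inv_eq_iff_eq_mul] at hyt
  have key := mul_zpow_of_commutator hxy cyt
  set x := PresentedGroup.of (rels := heisRels) Gen3.gX
  set y := PresentedGroup.of (rels := heisRels) Gen3.gY
  set t := PresentedGroup.of (rels := heisRels) Gen3.gT
  have ctx (m n : ℤ) : t ^ m * x ^ n = x ^ n * t ^ m := (cxt.zpow_zpow n m).symm.eq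
  have cty (m n : ℤ) : t ^ m * y ^ n = y ^ n * t ^ m := (cyt.zpow_zpow n m).symm.eq
  have key' (b : ℤ) : x * y ^ b = y ^ b * (x * t ^ (4 * b)) := by
    have := ctx (4 * b) 1
    rw [zpow_one] at this
    rw [key, cty, mul_assoc, this]
  have keyinv (b : ℤ) : x⁻¹ * y ^ b = y ^ b * (x⁻¹ * t ^ (-(4 * b))) := by
    have := ctx (-(4 * b)) (-1)
    rw [zpow_neg_one] at this
    rw [inv_mul_eq_iff_eq_mul, ← this, ← mul_assoc, ← mul_assoc, key', zpow_neg]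
    group
  induction hg using Subgroup.closure_induction_left with
  | one => exact ⟨0, 0, 0, by simp⟩
  | mul_left s hs g _ ih =>
    obtain ⟨i, rfl⟩ := hs
    obtain ⟨a, b, c, rfl⟩ := ih
    cases i
    · refine ⟨1 + a, b, 4 * b + c, ?_⟩
      change x * _ = _
      rw [← mul_assoc, ← mul_assoc, key', zpow_add, zpow_add, zpow_one]
      simp only [mul_assoc]
      rw [← mul_assoc (t ^ (4 * b)), ctx, mul_assoc]
    · refine ⟨a, 1 + b, c, ?_⟩
      change y * _ = _
      rw [zpow_add, zpow_one]
      simp only [mul_assoc]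
    · refine ⟨a, b, 1 + c, ?_⟩
      change t * _ = _
      have h1 := cty 1 b
      have h2 := ctx 1 a
      rw [zpow_one] at h1 h2
      rw [zpow_add, zpow_one, ← mul_assoc, ← mul_assoc, h1, mul_assoc (y ^ b), h2]
      simp only [mul_assoc]
  | inv_mul_cancel s hs g _ ih =>
    obtain ⟨i, rfl⟩ := hs
    obtain ⟨a, b, c, rfl⟩ := ih
    cases i
    · refine ⟨-1 + a, b, -(4 * b) + c, ?_⟩
      change x⁻¹ * _ = _
      rw [← mul_assoc, ← mul_assoc, keyinv, zpow_add x, zpow_add t, zpow_neg_one]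
      simp only [mul_assoc]
      rw [← mul_assoc (t ^ (-(4 * b))), ctx, mul_assoc]
    · refine ⟨a, -1 + b, c, ?_⟩
      change y⁻¹ * _ = _
      rw [zpow_add, zpow_neg_one]
      simp only [mul_assoc]
    · refine ⟨a, b, -1 + c, ?_⟩
      change t⁻¹ * _ = _
      have h1 := cty (-1) b
      have h2 := ctx (-1) a
      rw [zpow_neg_one] at h1 h2
      rw [zpow_add, zpow_neg_one, ← mul_assoc, ← mul_assoc, h1, mul_assoc (y ^ b), h2]
      simp only [mul_assoc]

/-- The homomorphism from G₁ = ⟨X,Y,τ | [X,Y]=τ⁴, [X,τ]=[Y,τ]=1⟩ to GL₃(ℚ)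
sending X ↦ M_X, Y ↦ M_Y, τ ↦ M_τ is an isomorphism onto the subgroup of GL₃(ℚ)
generated by M_X, M_Y, M_τ. -/
theorem statement14 :
    ∃ f : PresentedGroup heisRels →* (Matrix (Fin 3) (Fin 3) ℚ)ˣ,
      ((f (PresentedGroup.of Gen3.gX) : Matrix (Fin 3) (Fin 3) ℚ) = MX ∧
       (f (PresentedGroup.of Gen3.gY) : Matrix (Fin 3) (Fin 3) ℚ) = MY ∧
       (f (PresentedGroup.of Gen3.gT) : Matrix (Fin 3) (Fin 3) ℚ) = MT) ∧
      Function.Injective f ∧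
      f.range = Subgroup.closure {u : (Matrix (Fin 3) (Fin 3) ℚ)ˣ |
        (u : Matrix (Fin 3) (Fin 3) ℚ) = MX ∨ (u : Matrix (Fin 3) (Fin 3) ℚ) = MY ∨
        (u : Matrix (Fin 3) (Fin 3) ℚ) = MT} := by
  refine ⟨PresentedGroup.toGroup heisGen_rels, ⟨?_, ?_, ?_⟩, ?_, ?_⟩
  · simp [heisGen, heisUnit, MX]
  · simp [heisGen, heisUnit, MY]
  · simp [heisGen, heisUnit, MT]
  · rw [injective_iff_map_eq_one]
    intro g hg
    obtain ⟨a, b, c, rfl⟩ := exists_normal_form g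
    simp only [map_mul, map_zpow, PresentedGroup.toGroup.of, heisGen] at hg
    rw [normal_form_matrix] at hg
    obtain ⟨ha, hb, hc⟩ := heisUnit_eq_one hg
    have ha' : a = 0 := by exact_mod_cast ha
    have hb' : b = 0 := by exact_mod_cast hb
    have hc' : c = 0 := by
      have : (c : ℚ) = 0 := by linarith
      exact_mod_cast this
    simp [ha', hb', hc']
  · rw [MonoidHom.range_eq_map, ← PresentedGroup.closure_range_of, MonoidHom.map_closure]
    congr 1
    ext u
    constructor
    · rintro ⟨_, ⟨i, rfl⟩, rfl⟩
      rw [PresentedGroup.toGroup.of]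
      cases i
      · exact Or.inl (by simp [heisGen, heisUnit, MX])
      · exact Or.inr (Or.inl (by simp [heisGen, heisUnit, MY]))
      · exact Or.inr (Or.inr (by simp [heisGen, heisUnit, MT]))
    · rintro (h | h | h)
      · refine ⟨_, ⟨Gen3.gX, rfl⟩, Units.ext ?_⟩
        rw [PresentedGroup.toGroup.of, h]
        simp [heisGen, heisUnit, MX]
      · refine ⟨_, ⟨Gen3.gY, rfl⟩, Units.ext ?_⟩
        rw [PresentedGroup.toGroup.of, h]
        simp [heisGen, heisUnit, MY]
      · refine ⟨_, ⟨Gen3.gT, rfl⟩, Units.ext ?_⟩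
        rw [PresentedGroup.toGroup.of, h]
        simp [heisGen, heisUnit, MT]
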